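/- arXiv:2304.03340 — 2 statements merged into one kernel-verified Lean document; each statement's English description precedes it below -/
import Mathlib

section
/- Let C : ℝ × E → (E →L[ℝ] ℝ) be a C¹ field of linear forms. Then the Lie derivative d_L C (t, x) := ∂C/∂t(t, x) + D_x C(t, x)(u(t, x)) + C(t, x) ∘ D_x u(t, x) vanishes identically if and only if for every C¹ vector field J : ℝ × E → E whose Lie derivative d_L J (t, x) := ∂J/∂t(t, x) + D_x J(t, x)(u(t, x)) − D_x u(t, x)(J(t, x)) vanishes identically, and for every X ∈ E, the scalar t ↦ C(t, φ(t, X))(J(t, φ(t, X))) is constant in t. -/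
noncomputable section

local notation "E3" => EuclideanSpace ℝ (Fin 3)

/-!
Along a trajectory `γ` of `u` the Leibniz rule reads
`d/dt (C(J)) = (d_L C)(J) + C(d_L J)`, so the pairing of a moving form with a moving vector field is
constant. Conversely, the vectors `Dφ_t(X) w` transported by the motion form a moving field for
every fixed `w`; as `Dφ_t(X)` is invertible, such fields take every value at every point, and
constancy of their pairings with `C` forces `d_L C = 0`.

The analytic content is that a transported field is `C¹` although only the time slices `φ_t` are
assumed smooth. Grönwall's inequality makes `φ_t` Lipschitz in space, uniformly for nearby times;
the velocity `u_t ∘ φ_t` is then Lipschitz too, so `Dφ_t(X)` is Lipschitz in `t` and `φ` is jointly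
`C¹`. The same argument applied to the tangent lift of the motion, which follows the tangent lift of
`u`, shows that `(t, X) ↦ Dφ_t(X) w` is jointly `C¹`.
-/

open Set Filter Topology Metric Function
open scoped NNReal

section ParametricCurves

variable {V G : Type*} [NormedAddCommGroup V] [NormedAddCommGroup G] [NormedSpace ℝ G]

theorem lipschitzOnWith_sub_of_lipschitzOnWith_deriv {f g : ℝ → V → G} {I : Set ℝ} {S : Set V}
    {K : ℝ≥0} (hI : Convex ℝ I) (hf : ∀ τ ∈ I, ∀ x ∈ S, HasDerivAt (f · x) (g τ x) τ)
    (hg : ∀ τ ∈ I, LipschitzOnWith K (g τ) S) {s t : ℝ} (hs : s ∈ I) (ht : t ∈ I) :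
    LipschitzOnWith (K * ‖t - s‖₊) (fun x => f t x - f s x) S := by
  refine LipschitzOnWith.of_dist_le_mul fun x hx y hy => ?_
  have hbound := hI.norm_image_sub_le_of_norm_hasDerivWithin_le
    (fun τ hτ => ((hf τ hτ x hx).fun_sub (hf τ hτ y hy)).hasDerivWithinAt)
    (fun τ hτ => (hg τ hτ).norm_sub_le hx hy) hs ht
  calc dist (f t x - f s x) (f t y - f s y)
      = ‖(f t x - f t y) - (f s x - f s y)‖ := by rw [dist_eq_norm, sub_sub_sub_comm]
    _ ≤ K * ‖x - y‖ * ‖t - s‖ := hbound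
    _ = (K * ‖t - s‖₊ : ℝ≥0) * dist x y := by
      rw [NNReal.coe_mul, coe_nnnorm, dist_eq_norm, mul_right_comm]

variable [NormedSpace ℝ V]

theorem norm_fderiv_sub_le_of_lipschitzOnWith_deriv {f g : ℝ → V → G} {I : Set ℝ} {S : Set V}
    {K : ℝ≥0} (hI : Convex ℝ I) (hf : ∀ τ ∈ I, ∀ x ∈ S, HasDerivAt (f · x) (g τ x) τ)
    (hg : ∀ τ ∈ I, LipschitzOnWith K (g τ) S) {s t : ℝ} (hs : s ∈ I) (ht : t ∈ I) {x : V}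
    (hS : S ∈ 𝓝 x) (hfs : DifferentiableAt ℝ (f s) x) (hft : DifferentiableAt ℝ (f t) x) :
    ‖fderiv ℝ (f t) x - fderiv ℝ (f s) x‖ ≤ K * ‖t - s‖ := by
  simpa using (hft.hasFDerivAt.sub hfs.hasFDerivAt).le_of_lipschitzOn hS
    (lipschitzOnWith_sub_of_lipschitzOnWith_deriv hI hf hg hs ht)

theorem exists_lipschitzOnWith_sub_of_hasStrictFDerivAt {g : ℝ → V → G} {g' : ℝ × V →L[ℝ] G}
    {t : ℝ} {x : V} (hg : HasStrictFDerivAt (uncurry g) g' (t, x)) {c : ℝ≥0} (hc : 0 < c) :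
    ∃ ε > 0, ∃ S ∈ 𝓝 x, ∀ τ ∈ closedBall t ε, LipschitzOnWith c (fun y => g τ y - g t y) S := by
  obtain ⟨N, hN, happrox⟩ := hg.approximates_deriv_on_nhds (c := c / 2) (.inr (half_pos hc))
  obtain ⟨I, hI, S, hS, hIS⟩ := mem_nhds_prod_iff.1 hN
  obtain ⟨ε, hε, hεI⟩ := nhds_basis_closedBall.mem_iff.1 hI
  refine ⟨ε, hε, S, hS, fun τ hτ => LipschitzOnWith.of_dist_le_mul fun y hy z hz => ?_⟩
  have hslice (σ : ℝ) (hσ : σ ∈ closedBall t ε) :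
      ‖g σ y - g σ z - g' (0, y - z)‖ ≤ c / 2 * ‖y - z‖ := by
    simpa [Prod.norm_def] using happrox (σ, y) (hIS ⟨hεI hσ, hy⟩) (σ, z) (hIS ⟨hεI hσ, hz⟩)
  calc dist (g τ y - g t y) (g τ z - g t z)
      = ‖(g τ y - g τ z - g' (0, y - z)) - (g t y - g t z - g' (0, y - z))‖ := by
        rw [dist_eq_norm]; congr 1; abel
    _ ≤ c / 2 * ‖y - z‖ + c / 2 * ‖y - z‖ :=
        norm_sub_le_of_le (hslice τ hτ) (hslice t (mem_closedBall_self hε.le))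
    _ = c * dist y z := by rw [dist_eq_norm]; ring

theorem hasDerivAt_fderiv_of_hasStrictFDerivAt_deriv {f g : ℝ → V → G} {g' : ℝ × V →L[ℝ] G}
    {t : ℝ} {x : V} (hf : ∀ τ y, HasDerivAt (f · y) (g τ y) τ)
    (hfx : ∀ τ, DifferentiableAt ℝ (f τ) x) (hg : HasStrictFDerivAt (uncurry g) g' (t, x)) :
    HasDerivAt (fun τ => fderiv ℝ (f τ) x) (fderiv ℝ (g t) x) t := by
  have hgx : DifferentiableAt ℝ (g t) x :=
    (hg.hasFDerivAt.comp x (hasFDerivAt_prodMk_right t x)).differentiableAt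
  -- Subtracting the line `τ • g t` leaves a family whose velocity `g τ - g t` has an arbitrarily
  -- small Lipschitz constant near `(t, x)`.
  let f₀ : ℝ → V → G := fun τ y => f τ y - τ • g t y
  have hf₀ (τ : ℝ) (y : V) : HasDerivAt (f₀ · y) (g τ y - g t y) τ := by
    simpa using (hf τ y).fun_sub ((hasDerivAt_id τ).smul_const (g t y))
  have hf₀x (τ : ℝ) : HasFDerivAt (f₀ τ) (fderiv ℝ (f τ) x - τ • fderiv ℝ (g t) x) x :=
    (hfx τ).hasFDerivAt.sub (hgx.hasFDerivAt.const_smul τ)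
  refine hasDerivAt_iff_isLittleO.2 (Asymptotics.isLittleO_iff.2 fun c hc => ?_)
  lift c to ℝ≥0 using hc.le
  obtain ⟨ε, hε, S, hS, hlip⟩ := exists_lipschitzOnWith_sub_of_hasStrictFDerivAt hg hc
  filter_upwards [closedBall_mem_nhds t hε] with τ hτ
  have hbound := norm_fderiv_sub_le_of_lipschitzOnWith_deriv (convex_closedBall t ε)
    (fun σ _ y _ => hf₀ σ y) hlip (mem_closedBall_self hε.le) hτ hS
    (hf₀x t).differentiableAt (hf₀x τ).differentiableAt
  rw [(hf₀x τ).fderiv, (hf₀x t).fderiv] at hbound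
  rwa [sub_smul, sub_sub_sub_comm]

end ParametricCurves

section IntegralCurves

variable {V : Type*} [NormedAddCommGroup V] {u : ℝ → V → V}

theorem exists_closedBall_norm_lt_and_lipschitzOnWith (hu : LocallyLipschitz (uncurry u)) (t₀ : ℝ)
    (x₀ : V) :
    ∃ R > 0, ∃ M > 0, ∃ K : ℝ≥0, ∀ t ∈ closedBall t₀ R,
      (∀ x ∈ closedBall x₀ R, ‖u t x‖ < M) ∧ LipschitzOnWith K (u t) (closedBall x₀ R) := by
  obtain ⟨K, N, hN, hK⟩ := hu (t₀, x₀)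
  obtain ⟨R, hR, hRN⟩ := nhds_basis_closedBall.mem_iff.1 hN
  refine ⟨R, hR, ‖u t₀ x₀‖ + K * R + 1, by positivity, K, fun t ht => ⟨fun x hx => ?_, ?_⟩⟩
  · have htx : (t, x) ∈ closedBall (t₀, x₀) R := closedBall_prod_same t₀ x₀ R ▸ ⟨ht, hx⟩
    calc ‖u t x‖ ≤ ‖u t₀ x₀‖ + ‖u t x - u t₀ x₀‖ := norm_le_norm_add_norm_sub' _ _
      _ ≤ ‖u t₀ x₀‖ + K * ‖(t, x) - (t₀, x₀)‖ := by
          gcongr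
          exact hK.norm_sub_le (hRN htx) (mem_of_mem_nhds hN)
      _ ≤ ‖u t₀ x₀‖ + K * R := by
          gcongr
          exact mem_closedBall_iff_norm.1 htx
      _ < ‖u t₀ x₀‖ + K * R + 1 := lt_add_one _
  · simpa using! hK.comp (LipschitzWith.prodMk_left t).lipschitzOnWith
      fun x hx => hRN (closedBall_prod_same t₀ x₀ R ▸ ⟨ht, hx⟩)

variable [NormedSpace ℝ V]

theorem mem_closedBall_of_isIntegralCurve {γ : ℝ → V} (hγ : IsIntegralCurve γ u) {t₀ ε r R M : ℝ}
    {x₀ : V} (hM : 0 ≤ M) (hu : ∀ t ∈ Icc t₀ (t₀ + ε), ∀ x ∈ closedBall x₀ R, ‖u t x‖ < M)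
    (hγ₀ : γ t₀ ∈ closedBall x₀ r) (hR : r + M * ε ≤ R) :
    ∀ t ∈ Icc t₀ (t₀ + ε), γ t ∈ closedBall x₀ R := by
  have hBR {t : ℝ} (ht : t ≤ t₀ + ε) : r + M * (t - t₀) ≤ R := by
    nlinarith [mul_le_mul_of_nonneg_left ht hM]
  have hfence : ∀ ⦃t⦄, t ∈ Icc t₀ (t₀ + ε) → ‖γ t - x₀‖ ≤ r + M * (t - t₀) :=
    image_norm_le_of_norm_deriv_right_lt_deriv_boundary
      (hγ.continuous.sub continuous_const).continuousOn
      (fun t _ => ((hγ t).sub_const x₀).hasDerivWithinAt)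
      (by simpa using mem_closedBall_iff_norm.1 hγ₀)
      (fun t => (((hasDerivAt_id t).sub_const t₀).const_mul M).const_add r)
      (fun t ht heq => by
        rw [mul_one]
        refine hu t (Ico_subset_Icc_self ht) _ (mem_closedBall_iff_norm.2 ?_)
        exact heq.trans_le (hBR ht.2.le))
  exact fun t ht => mem_closedBall_iff_norm.2 ((hfence ht).trans (hBR ht.2))

theorem exists_dist_le_mul_of_isIntegralCurve_right (hu : LocallyLipschitz (uncurry u)) (t₀ : ℝ)
    (x₀ : V) :
    ∃ K : ℝ≥0, ∃ ε > 0, ∃ r > 0, ∀ γ₁ γ₂ : ℝ → V, IsIntegralCurve γ₁ u → IsIntegralCurve γ₂ u →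
      γ₁ t₀ ∈ closedBall x₀ r → γ₂ t₀ ∈ closedBall x₀ r →
      ∀ t ∈ Icc t₀ (t₀ + ε), dist (γ₁ t) (γ₂ t) ≤ K * dist (γ₁ t₀) (γ₂ t₀) := by
  obtain ⟨R, hR, M, hM, K, huR⟩ := exists_closedBall_norm_lt_and_lipschitzOnWith hu t₀ x₀
  let ε : ℝ := min R (R / 2 / M)
  have hε : 0 < ε := by positivity
  have hεM : R / 2 + M * ε ≤ R := by
    have : M * ε ≤ R / 2 := (le_div_iff₀' hM).1 (min_le_right _ _)
    linarith
  have hball : Icc t₀ (t₀ + ε) ⊆ closedBall t₀ R := by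
    rw [Real.closedBall_eq_Icc]
    exact Icc_subset_Icc (by linarith) (by gcongr; exact min_le_left _ _)
  have hstay {γ : ℝ → V} (hγ : IsIntegralCurve γ u) (hγ₀ : γ t₀ ∈ closedBall x₀ (R / 2)) :
      ∀ t ∈ Ico t₀ (t₀ + ε), γ t ∈ closedBall x₀ R := fun t ht =>
    mem_closedBall_of_isIntegralCurve hγ hM.le (fun s hs => (huR s (hball hs)).1) hγ₀ hεM t
      (Ico_subset_Icc_self ht)
  refine ⟨⟨Real.exp (K * ε), by positivity⟩, ε, hε, R / 2, half_pos hR, ?_⟩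
  intro γ₁ γ₂ h₁ h₂ h₁₀ h₂₀ t ht
  calc dist (γ₁ t) (γ₂ t)
      ≤ dist (γ₁ t₀) (γ₂ t₀) * Real.exp (K * (t - t₀)) :=
        dist_le_of_trajectories_ODE_of_mem
          (fun s hs => (huR s (hball (Ico_subset_Icc_self hs))).2)
          h₁.continuous.continuousOn (fun s _ => (h₁ s).hasDerivWithinAt) (hstay h₁ h₁₀)
          h₂.continuous.continuousOn (fun s _ => (h₂ s).hasDerivWithinAt) (hstay h₂ h₂₀)
          le_rfl t ht
    _ ≤ Real.exp (K * ε) * dist (γ₁ t₀) (γ₂ t₀) := by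
        rw [mul_comm]
        gcongr
        linarith [ht.2]

theorem exists_dist_le_mul_of_isIntegralCurve (hu : LocallyLipschitz (uncurry u)) (t₀ : ℝ)
    (x₀ : V) :
    ∃ K : ℝ≥0, ∃ ε > 0, ∃ r > 0, ∀ γ₁ γ₂ : ℝ → V, IsIntegralCurve γ₁ u → IsIntegralCurve γ₂ u →
      γ₁ t₀ ∈ closedBall x₀ r → γ₂ t₀ ∈ closedBall x₀ r →
      ∀ t ∈ closedBall t₀ ε, dist (γ₁ t) (γ₂ t) ≤ K * dist (γ₁ t₀) (γ₂ t₀) := by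
  have hreversed : LocallyLipschitz (uncurry ((-1 : ℝ) • u ∘ (· * (-1)))) := by
    have hneg : LipschitzWith ‖(-1 : ℝ)‖₊ fun x : V => (-1 : ℝ) • x := lipschitzWith_smul (-1 : ℝ)
    have hflip : LipschitzWith 1 fun p : ℝ × V => (p.1 * -1, p.2) := by
      simpa using LipschitzWith.prod_fst.neg.prodMk LipschitzWith.prod_snd
    exact hneg.locallyLipschitz.comp (hu.comp hflip.locallyLipschitz)
  obtain ⟨K₁, ε₁, hε₁, r₁, hr₁, hfwd⟩ := exists_dist_le_mul_of_isIntegralCurve_right hu t₀ x₀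
  obtain ⟨K₂, ε₂, hε₂, r₂, hr₂, hbwd⟩ :=
    exists_dist_le_mul_of_isIntegralCurve_right hreversed (-t₀) x₀
  refine ⟨max K₁ K₂, min ε₁ ε₂, lt_min hε₁ hε₂, min r₁ r₂, lt_min hr₁ hr₂, ?_⟩
  intro γ₁ γ₂ h₁ h₂ h₁₀ h₂₀ t ht
  rw [Real.closedBall_eq_Icc] at ht
  rcases le_total t₀ t with h | h
  · refine (hfwd γ₁ γ₂ h₁ h₂ (closedBall_subset_closedBall (min_le_left _ _) h₁₀)
      (closedBall_subset_closedBall (min_le_left _ _) h₂₀) t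
      ⟨h, by linarith [ht.2, min_le_left ε₁ ε₂]⟩).trans ?_
    gcongr
    exact le_max_left _ _
  · have := hbwd _ _ (h₁.comp_mul (-1)) (h₂.comp_mul (-1))
      (by simpa using closedBall_subset_closedBall (min_le_right _ _) h₁₀)
      (by simpa using closedBall_subset_closedBall (min_le_right _ _) h₂₀) (-t)
      ⟨by linarith, by linarith [ht.1, min_le_right ε₁ ε₂]⟩
    simp only [comp_apply, mul_neg, mul_one, neg_neg] at this
    refine this.trans ?_
    gcongr
    exact le_max_right _ _

end IntegralCurves

section Flow

variable {V : Type*} [NormedAddCommGroup V] [NormedSpace ℝ V] {u φ : ℝ → V → V}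

theorem exists_lipschitzOnWith_flow (hu : LocallyLipschitz (uncurry u))
    (hφ : ∀ X, IsIntegralCurve (φ · X) u) (hlip : ∀ t, LocallyLipschitz (φ t)) (t₀ : ℝ) (X₀ : V) :
    ∃ K, ∃ I ∈ 𝓝 t₀, ∃ S ∈ 𝓝 X₀, ∀ t ∈ I, LipschitzOnWith K (φ t) S := by
  obtain ⟨K, ε, hε, r, hr, hK⟩ := exists_dist_le_mul_of_isIntegralCurve hu t₀ (φ t₀ X₀)
  obtain ⟨K₀, S, hS, hK₀⟩ := hlip t₀ X₀
  refine ⟨K * K₀, closedBall t₀ ε, closedBall_mem_nhds t₀ hε,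
    S ∩ φ t₀ ⁻¹' closedBall (φ t₀ X₀) r,
    inter_mem hS ((hlip t₀).continuous.continuousAt (closedBall_mem_nhds _ hr)), fun t ht => ?_⟩
  refine LipschitzOnWith.of_dist_le_mul fun X hX Y hY => ?_
  calc dist (φ t X) (φ t Y) ≤ K * dist (φ t₀ X) (φ t₀ Y) :=
        hK _ _ (hφ X) (hφ Y) hX.2 hY.2 t ht
    _ ≤ K * (K₀ * dist X Y) := by
        gcongr
        exact hK₀.dist_le_mul X hX.1 Y hY.1
    _ = (K * K₀ : ℝ≥0) * dist X Y := by rw [NNReal.coe_mul, mul_assoc]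

theorem continuous_uncurry_flow (hu : LocallyLipschitz (uncurry u))
    (hφ : ∀ X, IsIntegralCurve (φ · X) u) (hlip : ∀ t, LocallyLipschitz (φ t)) :
    Continuous (uncurry φ) := by
  refine continuous_iff_continuousAt.2 fun ⟨t₀, X₀⟩ => ?_
  obtain ⟨K, I, hI, S, hS, hK⟩ := exists_lipschitzOnWith_flow hu hφ hlip t₀ X₀
  exact (continuousOn_prod_of_continuousOn_lipschitzOnWith' _ K hK
    fun X _ => (hφ X).continuous.continuousOn).continuousAt (prod_mem_nhds hI hS)

theorem exists_lipschitzOnWith_velocity_flow (hu : LocallyLipschitz (uncurry u))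
    (hφ : ∀ X, IsIntegralCurve (φ · X) u) (hlip : ∀ t, LocallyLipschitz (φ t)) (t₀ : ℝ) (X₀ : V) :
    ∃ K, ∃ ε > 0, ∃ S ∈ 𝓝 X₀, ∀ t ∈ closedBall t₀ ε,
      LipschitzOnWith K (fun X => u t (φ t X)) S := by
  obtain ⟨K, I, hI, S, hS, hK⟩ := exists_lipschitzOnWith_flow hu hφ hlip t₀ X₀
  obtain ⟨L, N, hN, hL⟩ := hu (t₀, φ t₀ X₀)
  have hcont : Continuous fun p : ℝ × V => (p.1, φ p.1 p.2) :=
    continuous_fst.prodMk (continuous_uncurry_flow hu hφ hlip)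
  obtain ⟨I', hI', S', hS', hIS'⟩ :=
    mem_nhds_prod_iff.1 (hcont.continuousAt (x := (t₀, X₀)) hN)
  obtain ⟨ε, hε, hεI⟩ := nhds_basis_closedBall.mem_iff.1 (inter_mem hI hI')
  refine ⟨L * max 0 K, ε, hε, S ∩ S', inter_mem hS hS', fun t ht => ?_⟩
  have hgraph := (LipschitzWith.const t).lipschitzOnWith.prodMk
    ((hK t (hεI ht).1).mono (inter_subset_left (t := S')))
  exact hL.comp hgraph fun X hX => hIS' (show (t, X) ∈ I' ×ˢ S' from ⟨(hεI ht).2, hX.2⟩)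

theorem continuous_fderiv_flow (hu : LocallyLipschitz (uncurry u))
    (hφ : ∀ X, IsIntegralCurve (φ · X) u) (hφ₁ : ∀ t, ContDiff ℝ 1 (φ t)) :
    Continuous fun p : ℝ × V => fderiv ℝ (φ p.1) p.2 := by
  refine continuous_iff_continuousAt.2 fun ⟨t₀, X₀⟩ => ?_
  obtain ⟨K, ε, hε, S, hS, hK⟩ := exists_lipschitzOnWith_velocity_flow hu hφ
    (fun t => (hφ₁ t).locallyLipschitz) t₀ X₀
  have htime : ∀ X ∈ interior S,
      LipschitzOnWith K (fun t => fderiv ℝ (φ t) X) (closedBall t₀ ε) := fun X hX =>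
    LipschitzOnWith.of_dist_le_mul fun t ht s hs => by
      simpa only [dist_eq_norm] using norm_fderiv_sub_le_of_lipschitzOnWith_deriv
        (convex_closedBall t₀ ε) (fun τ _ Y _ => hφ Y τ) hK hs ht
        (mem_interior_iff_mem_nhds.1 hX) ((hφ₁ s).differentiable one_ne_zero X)
        ((hφ₁ t).differentiable one_ne_zero X)
  exact (continuousOn_prod_of_continuousOn_lipschitzOnWith _ K
    (fun t _ => ((hφ₁ t).continuous_fderiv one_ne_zero).continuousOn) htime).continuousAt
    (prod_mem_nhds (closedBall_mem_nhds t₀ hε) (interior_mem_nhds.2 hS))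

theorem contDiff_one_uncurry_flow (hu : LocallyLipschitz (uncurry u))
    (hφ : ∀ X, IsIntegralCurve (φ · X) u) (hφ₁ : ∀ t, ContDiff ℝ 1 (φ t)) :
    ContDiff ℝ 1 (uncurry φ) := by
  let velocity (t : ℝ) (X : V) : ℝ →L[ℝ] V := ContinuousLinearMap.toSpanSingleton ℝ (u t (φ t X))
  have hvelocity : Continuous (uncurry velocity) :=
    (ContinuousLinearMap.toSpanSingletonCLE (𝕜 := ℝ) (E := V)).continuous.comp <|
      hu.continuous.comp <| continuous_fst.prodMk <|
        continuous_uncurry_flow hu hφ fun t => (hφ₁ t).locallyLipschitz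
  have hspace : Continuous (uncurry fun t X => fderiv ℝ (φ t) X) := continuous_fderiv_flow hu hφ hφ₁
  have hderiv (p : ℝ × V) :
      HasFDerivAt (uncurry φ) ((velocity p.1 p.2).coprod (fderiv ℝ (φ p.1) p.2)) p :=
    (hasStrictFDerivAt_uncurry_coprod (f₁ := velocity) (f₂ := fun t X => fderiv ℝ (φ t) X)
      (.of_forall fun q => (hφ q.2 q.1).hasFDerivAt)
      (.of_forall fun q => ((hφ₁ q.1).differentiable one_ne_zero q.2).hasFDerivAt)
      hvelocity.continuousAt hspace.continuousAt).hasFDerivAt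
  refine contDiff_one_iff_hasFDerivAt.2 ⟨_, ?_, hderiv⟩
  exact hvelocity.continuousLinearMapCoprod hspace

theorem hasDerivAt_fderiv_flow (hu : ContDiff ℝ 1 (uncurry u))
    (hφ : ∀ X, IsIntegralCurve (φ · X) u) (hφ₁ : ∀ t, ContDiff ℝ 1 (φ t)) (t : ℝ) (X : V) :
    HasDerivAt (fun τ => fderiv ℝ (φ τ) X)
      ((fderiv ℝ (u t) (φ t X)).comp (fderiv ℝ (φ t) X)) t := by
  have hvelocity : ContDiff ℝ 1 (uncurry fun τ Y => u τ (φ τ Y)) :=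
    hu.comp (contDiff_fst.prodMk (contDiff_one_uncurry_flow hu.locallyLipschitz hφ hφ₁))
  have hut : DifferentiableAt ℝ (u t) (φ t X) :=
    (hu.comp (contDiff_prodMk_right t)).differentiable one_ne_zero _
  have hφt (τ : ℝ) : DifferentiableAt ℝ (φ τ) X := (hφ₁ τ).differentiable one_ne_zero X
  rw [← fderiv_comp X hut (hφt t)]
  exact hasDerivAt_fderiv_of_hasStrictFDerivAt_deriv (fun τ Y => hφ Y τ) hφt
    (hvelocity.contDiffAt.hasStrictFDerivAt one_ne_zero)

/-- The tangent lift `(x, v) ↦ (f t x, D(f t)(x) v)` of a time-dependent self-map `f` of `V`, with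
the tangent bundle of `V` encoded as `V × V`. For a velocity field it is the (complete) lift whose
integral curves solve the equation of `f` together with its linearisation. -/
def tangentLift (f : ℝ → V → V) (t : ℝ) (p : V × V) : V × V :=
  (f t p.1, fderiv ℝ (f t) p.1 p.2)

theorem contDiff_uncurry_tangentLift {f : ℝ → V → V} {m n : WithTop ℕ∞}
    (hf : ContDiff ℝ n (uncurry f)) (hmn : m + 1 ≤ n) : ContDiff ℝ m (uncurry (tangentLift f)) := by
  have hderiv : ContDiff ℝ m fun q : ℝ × V × V => fderiv ℝ (f q.1) q.2.1 :=
    ContDiff.fderiv (f := fun q : ℝ × V × V => f q.1)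
      (hf.comp (contDiff_fst.fst.prodMk contDiff_snd)) contDiff_snd.fst hmn
  exact ((hf.of_le (le_self_add.trans hmn)).comp (contDiff_fst.prodMk contDiff_snd.fst)).prodMk
    (hderiv.clm_apply contDiff_snd.snd)

theorem contDiff_tangentLift {f : ℝ → V → V} {m n : WithTop ℕ∞} {t : ℝ}
    (hf : ContDiff ℝ n (f t)) (hmn : m + 1 ≤ n) : ContDiff ℝ m (tangentLift f t) :=
  ((hf.of_le (le_self_add.trans hmn)).comp contDiff_fst).prodMk (hf.contDiff_fderiv_apply hmn)

theorem isIntegralCurve_tangentLift (hu : ContDiff ℝ 1 (uncurry u))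
    (hφ : ∀ X, IsIntegralCurve (φ · X) u) (hφ₁ : ∀ t, ContDiff ℝ 1 (φ t)) (p : V × V) :
    IsIntegralCurve (tangentLift φ · p) (tangentLift u) := fun t =>
  (hφ p.1 t).prodMk <| by
    simpa [tangentLift] using
      (hasDerivAt_fderiv_flow hu hφ hφ₁ t p.1).clm_apply (hasDerivAt_const t p.2)

theorem contDiff_one_fderiv_flow_apply (hu : ContDiff ℝ 2 (uncurry u))
    (hφ : ∀ X, IsIntegralCurve (φ · X) u) (hφ₂ : ∀ t, ContDiff ℝ 2 (φ t)) (w : V) :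
    ContDiff ℝ 1 (uncurry fun t X => fderiv ℝ (φ t) X w) := by
  have hlift : ContDiff ℝ 1 (uncurry (tangentLift φ)) :=
    contDiff_one_uncurry_flow
      (contDiff_uncurry_tangentLift hu one_add_one_eq_two.le).locallyLipschitz
      (isIntegralCurve_tangentLift (hu.of_le one_le_two) hφ fun t => (hφ₂ t).of_le one_le_two)
      fun t => contDiff_tangentLift (hφ₂ t) one_add_one_eq_two.le
  exact (hlift.comp (contDiff_fst.prodMk (contDiff_snd.prodMk contDiff_const))).snd

end Flow

section LocalInverse

variable {V W G : Type*} [NormedAddCommGroup V] [NormedSpace ℝ V] [CompleteSpace V]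
  [NormedAddCommGroup W] [NormedSpace ℝ W] [NormedAddCommGroup G] [NormedSpace ℝ G]
  {n : WithTop ℕ∞}

theorem contDiffAt_of_comp_of_hasFDerivAt_equiv {f : V → W} {g : W → G} {f' : V ≃L[ℝ] W} {x : V}
    (hf : ContDiffAt ℝ n f x) (hf' : HasFDerivAt f (f' : V →L[ℝ] W) x) (hn : n ≠ 0)
    (hgf : ContDiffAt ℝ n (g ∘ f) x) : ContDiffAt ℝ n g (f x) := by
  have hinv : hf.localInverse hf' hn (f x) = x := hf.localInverse_apply_image hf' hn
  have hright : ∀ᶠ y in 𝓝 (f x), f (hf.localInverse hf' hn y) = y :=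
    (hf.hasStrictFDerivAt' hf' hn).eventually_right_inverse
  refine ContDiffAt.congr_of_eventuallyEq ?_ (hright.mono fun y hy => (congrArg g hy).symm)
  rw [← hinv] at hgf
  exact hgf.comp (f x) (hf.to_localInverse hf' hn)

theorem contDiff_uncurry_of_comp {P : Type*} [NormedAddCommGroup P] [NormedSpace ℝ P]
    [CompleteSpace P] {φ : P → V → W} {J : P → W → G} (hn : n ≠ 0)
    (hφ : ContDiff ℝ n (uncurry φ)) (hsurj : ∀ t, Surjective (φ t))
    (hinv : ∀ t X, (fderiv ℝ (φ t) X).IsInvertible)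
    (hJ : ContDiff ℝ n (uncurry fun t X => J t (φ t X))) : ContDiff ℝ n (uncurry J) := by
  refine contDiff_iff_contDiffAt.2 fun ⟨t, x⟩ => ?_
  obtain ⟨X, rfl⟩ := hsurj t x
  obtain ⟨A, hA⟩ := hinv t X
  have hd : HasFDerivAt (uncurry φ) (fderiv ℝ (uncurry φ) (t, X)) (t, X) :=
    (hφ.differentiable hn _).hasFDerivAt
  have hslice : (A : V →L[ℝ] W) = (fderiv ℝ (uncurry φ) (t, X)).comp (.inr ℝ P V) :=
    hA.trans (hd.comp X (hasFDerivAt_prodMk_right t X)).fderiv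
  let Φ' : (P × V) ≃L[ℝ] (P × W) := (ContinuousLinearEquiv.refl ℝ P).skewProd A
    ((fderiv ℝ (uncurry φ) (t, X)).comp (.inl ℝ P V))
  have hΦ' : HasFDerivAt (fun p : P × V => (p.1, φ p.1 p.2)) (Φ' : P × V →L[ℝ] P × W) (t, X) := by
    refine (hasFDerivAt_fst.prodMk hd).congr_fderiv ?_
    refine ContinuousLinearMap.ext fun q => Prod.ext rfl ?_
    change fderiv ℝ (uncurry φ) (t, X) q =
      (A : V →L[ℝ] W) q.2 + fderiv ℝ (uncurry φ) (t, X) (q.1, 0)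
    simp [hslice, ← map_add]
  exact contDiffAt_of_comp_of_hasFDerivAt_equiv (f := fun p : P × V => (p.1, φ p.1 p.2))
    (g := uncurry J) (x := (t, X)) (contDiff_fst.prodMk hφ).contDiffAt hΦ' hn hJ.contDiffAt

end LocalInverse

section LieDerivative

variable {V G : Type*} [NormedAddCommGroup V] [NormedSpace ℝ V] [NormedAddCommGroup G]
  [NormedSpace ℝ G] {u : ℝ → V → V}

/-- The material derivative `∂f/∂t + D_x f(u)` of a time-dependent field `f`: its rate of change as
seen by a particle moving with velocity `u`. -/
def materialDeriv (u : ℝ → V → V) (f : ℝ → V → G) (t : ℝ) (x : V) : G :=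
  deriv (fun τ => f τ x) t + fderiv ℝ (f t) x (u t x)

/-- The Lie derivative along `u` of a time-dependent field of `G`-valued linear forms. A field is
moving with the fluid when it vanishes identically. -/
def formLieDeriv (u : ℝ → V → V) (C : ℝ → V → V →L[ℝ] G) (t : ℝ) (x : V) : V →L[ℝ] G :=
  materialDeriv u C t x + (C t x).comp (fderiv ℝ (u t) x)

/-- The Lie derivative along `u` of a time-dependent vector field. A field is moving with the fluid
when it vanishes identically. -/
def vectorLieDeriv (u : ℝ → V → V) (J : ℝ → V → V) (t : ℝ) (x : V) : V :=
  materialDeriv u J t x - fderiv ℝ (u t) x (J t x)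

theorem hasDerivAt_materialDeriv {γ : ℝ → V} (hγ : IsIntegralCurve γ u) {f : ℝ → V → G} {t : ℝ}
    (hf : DifferentiableAt ℝ (uncurry f) (t, γ t)) :
    HasDerivAt (fun τ => f τ (γ τ)) (materialDeriv u f t (γ t)) t := by
  have htime : HasDerivAt (fun τ => f τ (γ t)) (fderiv ℝ (uncurry f) (t, γ t) (1, 0)) t :=
    hf.hasFDerivAt.comp_hasDerivAt_of_eq t ((hasDerivAt_id t).prodMk (hasDerivAt_const t (γ t))) rfl
  have hspace : HasFDerivAt (f t) ((fderiv ℝ (uncurry f) (t, γ t)).comp (.inr ℝ ℝ V)) (γ t) :=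
    hf.hasFDerivAt.comp (γ t) (hasFDerivAt_prodMk_right t (γ t))
  have hcurve : HasDerivAt (fun τ => f τ (γ τ)) (fderiv ℝ (uncurry f) (t, γ t) (1, u t (γ t))) t :=
    hf.hasFDerivAt.comp_hasDerivAt_of_eq t ((hasDerivAt_id t).prodMk (hγ t)) rfl
  refine hcurve.congr_deriv ?_
  rw [materialDeriv, htime.deriv, hspace.fderiv]
  simp [← map_add]

theorem hasDerivAt_pairing_of_isIntegralCurve {γ : ℝ → V} (hγ : IsIntegralCurve γ u)
    {C : ℝ → V → V →L[ℝ] G} {J : ℝ → V → V} {t : ℝ}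
    (hC : DifferentiableAt ℝ (uncurry C) (t, γ t)) (hJ : DifferentiableAt ℝ (uncurry J) (t, γ t)) :
    HasDerivAt (fun τ => C τ (γ τ) (J τ (γ τ)))
      (formLieDeriv u C t (γ t) (J t (γ t)) + C t (γ t) (vectorLieDeriv u J t (γ t))) t := by
  refine ((hasDerivAt_materialDeriv hγ hC).clm_apply
    (hasDerivAt_materialDeriv hγ hJ)).congr_deriv ?_
  simp only [formLieDeriv, vectorLieDeriv, add_apply,
    ContinuousLinearMap.comp_apply, map_sub]
  abel

end LieDerivative

section TransportedField

variable {V : Type*} [NormedAddCommGroup V] [NormedSpace ℝ V] {u φ : ℝ → V → V}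

/-- The vector field `D(φ t)(φ t ⁻¹ x) w`, which carries the constant vector `w` along by the
motion `φ`. The inverse `Function.invFun (φ t)` is meaningful when `φ t` is bijective. -/
def transportedField (φ : ℝ → V → V) (w : V) (t : ℝ) (x : V) : V :=
  fderiv ℝ (φ t) (invFun (φ t) x) w

theorem transportedField_apply {t : ℝ} (hφ : Injective (φ t)) (w X : V) :
    transportedField φ w t (φ t X) = fderiv ℝ (φ t) X w := by
  rw [transportedField, leftInverse_invFun hφ X]

theorem contDiff_one_transportedField [CompleteSpace V] (hu : ContDiff ℝ 2 (uncurry u))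
    (hφ : ∀ X, IsIntegralCurve (φ · X) u) (hφ₂ : ∀ t, ContDiff ℝ 2 (φ t))
    (hbij : ∀ t, Bijective (φ t)) (hinv : ∀ t X, (fderiv ℝ (φ t) X).IsInvertible) (w : V) :
    ContDiff ℝ 1 (uncurry (transportedField φ w)) := by
  refine contDiff_uncurry_of_comp one_ne_zero
    (contDiff_one_uncurry_flow (hu.of_le one_le_two).locallyLipschitz hφ
      fun t => (hφ₂ t).of_le one_le_two)
    (fun t => (hbij t).surjective) hinv ?_
  simp only [transportedField_apply (hbij _).injective]
  exact contDiff_one_fderiv_flow_apply hu hφ hφ₂ w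

theorem vectorLieDeriv_transportedField (hu : ContDiff ℝ 1 (uncurry u))
    (hφ : ∀ X, IsIntegralCurve (φ · X) u) (hφ₁ : ∀ t, ContDiff ℝ 1 (φ t))
    (hbij : ∀ t, Bijective (φ t)) {w : V}
    (hw : Differentiable ℝ (uncurry (transportedField φ w))) (t : ℝ) (x : V) :
    vectorLieDeriv u (transportedField φ w) t x = 0 := by
  obtain ⟨X, rfl⟩ := (hbij t).surjective x
  have hmaterial := hasDerivAt_materialDeriv (hφ X) (hw (t, φ t X))
  have hvariational :=
    (hasDerivAt_fderiv_flow hu hφ hφ₁ t X).clm_apply (hasDerivAt_const t w)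
  simp only [transportedField_apply (hbij _).injective] at hmaterial
  rw [vectorLieDeriv, transportedField_apply (hbij t).injective, sub_eq_zero]
  simpa using hmaterial.unique hvariational

end TransportedField

theorem form_field_moving_iff_pairing_constant_general {V G : Type*} [NormedAddCommGroup V]
    [NormedSpace ℝ V] [CompleteSpace V] [NormedAddCommGroup G] [NormedSpace ℝ G] {u φ : ℝ → V → V}
    (hu : ContDiff ℝ 2 (uncurry u)) (hφ : ∀ X, IsIntegralCurve (φ · X) u)
    (hφ₂ : ∀ t, ContDiff ℝ 2 (φ t)) (hbij : ∀ t, Bijective (φ t))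
    (hinv : ∀ t X, (fderiv ℝ (φ t) X).IsInvertible) {C : ℝ → V → V →L[ℝ] G}
    (hC : ContDiff ℝ 1 (uncurry C)) :
    (∀ t x, formLieDeriv u C t x = 0) ↔
      ∀ J : ℝ → V → V, ContDiff ℝ 1 (uncurry J) → (∀ t x, vectorLieDeriv u J t x = 0) →
        ∀ (X : V) (t₁ t₂ : ℝ), C t₁ (φ t₁ X) (J t₁ (φ t₁ X)) = C t₂ (φ t₂ X) (J t₂ (φ t₂ X)) := by
  have hpairing {J : ℝ → V → V} (hJ : ContDiff ℝ 1 (uncurry J))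
      (hmoving : ∀ t x, vectorLieDeriv u J t x = 0) (X : V) (t : ℝ) :
      HasDerivAt (fun τ => C τ (φ τ X) (J τ (φ τ X)))
        (formLieDeriv u C t (φ t X) (J t (φ t X))) t := by
    simpa only [hmoving, map_zero, add_zero] using hasDerivAt_pairing_of_isIntegralCurve (hφ X)
      (hC.differentiable one_ne_zero _) (hJ.differentiable one_ne_zero _)
  refine ⟨fun hC₀ J hJ hmoving X => is_const_of_deriv_eq_zero
    (fun t => (hpairing hJ hmoving X t).differentiableAt) fun t => ?_, fun hconst t x => ?_⟩
  · rw [(hpairing hJ hmoving X t).deriv, hC₀, zero_apply]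
  · ext v
    obtain ⟨X, rfl⟩ := (hbij t).surjective x
    obtain ⟨w, rfl⟩ := (hinv t X).bijective.surjective v
    have hJ := contDiff_one_transportedField hu hφ hφ₂ hbij hinv w
    have hmoving := vectorLieDeriv_transportedField (hu.of_le one_le_two) hφ
      (fun t => (hφ₂ t).of_le one_le_two) hbij (hJ.differentiable one_ne_zero)
    rw [← transportedField_apply (hbij t).injective]
    refine (hpairing hJ hmoving X t).unique ?_
    simpa only [hconst _ hJ hmoving X _ t, zero_apply] using hasDerivAt_const t _

/-- A form field is moving with the fluid iff, paired with any
vector field moving with the fluid, it yields a scalar constant along trajectories. -/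
theorem form_field_moving_iff_pairing_constant
    (u φ : ℝ → E3 → E3)
    (F : ℝ → E3 → (E3 ≃L[ℝ] E3))
    (hu : ContDiff ℝ (⊤ : ℕ∞) (Function.uncurry u))
    (hφ0 : ∀ X, φ 0 X = X)
    (hφt : ∀ t X, HasDerivAt (fun τ => φ τ X) (u t (φ t X)) t)
    (hφsmooth : ∀ t, ContDiff ℝ (⊤ : ℕ∞) (φ t))
    (hφbij : ∀ t, Function.Bijective (φ t))
    (hφinv : ∀ t, ContDiff ℝ (⊤ : ℕ∞) (Function.invFun (φ t)))
    (hF : ∀ t X, (F t X : E3 →L[ℝ] E3) = fderiv ℝ (φ t) X)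
    (C : ℝ → E3 → (E3 →L[ℝ] ℝ))
    (hC : ContDiff ℝ 1 (Function.uncurry C)) :
    (∀ t x, deriv (fun τ => C τ x) t + fderiv ℝ (C t) x (u t x)
        + (C t x).comp (fderiv ℝ (u t) x) = 0) ↔
      (∀ J : ℝ → E3 → E3, ContDiff ℝ 1 (Function.uncurry J) →
        (∀ t x, deriv (fun τ => J τ x) t + fderiv ℝ (J t) x (u t x)
          - fderiv ℝ (u t) x (J t x) = 0) →
        ∀ (X : E3) (t₁ t₂ : ℝ),
          C t₁ (φ t₁ X) (J t₁ (φ t₁ X)) = C t₂ (φ t₂ X) (J t₂ (φ t₂ X))) :=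
  have htwo : (2 : WithTop ℕ∞) ≤ (⊤ : ℕ∞) := WithTop.coe_le_coe.2 (le_top : (2 : ℕ∞) ≤ ⊤)
  form_field_moving_iff_pairing_constant_general (hu.of_le htwo) (fun X t => hφt t X)
    (fun t => (hφsmooth t).of_le htwo) hφbij (fun t X => ⟨F t X, hF t X⟩) hC
end
end

section
/- (Transport theorem for 3-forms.) Let v : ℝ × E → ℝ be C¹ and let Ω₀ ⊆ E be a compact measurable set. Then the function t ↦ ∫_{Ω₀} v(t, φ(t, X)) · det F(t, X) dX is differentiable and its derivative equals ∫_{Ω₀} [ ∂v/∂t + D_x v (u) + v · div u ]（t, φ(t, X)) · det F(t, X) dX; i.e. d/dt ∫_Ω π dω = ∫_Ω d_L π dω for the 3-form π = v·det on the convected domain Ω = φ(t, Ω₀). -/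
noncomputable section

open MeasureTheory

local notation "E3" => EuclideanSpace ℝ (Fin 3)

/-- divergence of a vector field: trace of its Fréchet derivative. -/
def divv (w : E3 → E3) (x : E3) : ℝ :=
  LinearMap.trace ℝ E3 (fderiv ℝ w x : E3 →ₗ[ℝ] E3)

/-!
Pulling `π` back to the reference domain turns the integrand into `v(t, φ) · det Dφ`, so it suffices
to differentiate under the integral sign. The spatial derivative of the flow satisfies the equation
of variations `∂ₜ Dφ = Du(φ) ∘ Dφ`, obtained by differentiating `φ(t, x) = x + ∫₀ᵗ u(τ, φ(τ, x)) dτ`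
in `x`; by Jacobi's formula `∂ₜ det Dφ = (div u)(φ) · det Dφ`. Both interchanges need only that `φ`
is locally Lipschitz in `(t, x)`. Grönwall's inequality gives this in `x` at a fixed positive time,
and it applies to `t` of either sign at once because `(t, x) ↦ (t, φ(t, x))` is the time-one map of
the flow of `(0, t • u(st, x))` on `ℝ × E`.
-/

open Set Metric Function
open scoped NNReal Topology

section Lipschitz

variable {α E F : Type*} [PseudoMetricSpace α] [ProperSpace α]
  [NormedAddCommGroup E] [ProperSpace E]

lemma exists_lipschitzOnWith_closedBall_of_isCompact [PseudoMetricSpace F] {f : α → E → F}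
    (hf : LocallyLipschitz (uncurry f)) {S : Set (α × E)} (hS : IsCompact S) (r : ℝ) :
    ∃ K : ℝ≥0, ∀ p ∈ S, LipschitzOnWith K (f p.1) (closedBall p.2 r) := by
  obtain ⟨K, hK⟩ :=
    hf.locallyLipschitzOn.exists_lipschitzOnWith_of_compact (s := cthickening r S) hS.cthickening
  refine ⟨K, fun p hp => ?_⟩
  have hball : MapsTo (Prod.mk p.1) (closedBall p.2 r) (cthickening r S) := fun x hx =>
    closedBall_subset_cthickening hp r (by simpa [Prod.dist_eq] using hx)
  simpa using! hK.comp (LipschitzWith.prodMk_left p.1).lipschitzOnWith hball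

lemma exists_norm_fderiv_le_of_isCompact [NormedSpace ℝ E] [NormedAddCommGroup F]
    [NormedSpace ℝ F] {f : α → E → F} (hf : LocallyLipschitz (uncurry f)) {S : Set (α × E)}
    (hS : IsCompact S) : ∃ C : ℝ, ∀ p ∈ S, ‖fderiv ℝ (f p.1) p.2‖ ≤ C := by
  obtain ⟨K, hK⟩ := exists_lipschitzOnWith_closedBall_of_isCompact hf hS 1
  exact ⟨K, fun p hp =>
    norm_fderiv_le_of_lipschitzOn ℝ (closedBall_mem_nhds p.2 one_pos) (hK p hp)⟩

end Lipschitz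

section Flow

variable {E : Type*} [NormedAddCommGroup E] [NormedSpace ℝ E] {u φ : ℝ → E → E}

/-- The time-dependent field `u` has the complete flow `φ` (in continuum mechanics: `φ` is the
motion with velocity field `u`), time `0` being the reference time. -/
structure IsFlowOf (φ u : ℝ → E → E) : Prop where
  map_zero : ∀ x, φ 0 x = x
  isIntegralCurve : ∀ x, IsIntegralCurve (fun t => φ t x) u

/-- The radius of the tube shrinks backwards in time at the rate `K + 1`, which strictly exceeds the
rate `K` at which trajectories can separate inside it, so none can leave through its side. -/
lemma dist_integralCurve_le_of_dist_le {γ η : ℝ → E} {K : ℝ≥0} {r a b : ℝ} (hr : 0 < r)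
    (hγ : IsIntegralCurve γ u) (hη : IsIntegralCurve η u)
    (hu : ∀ t ∈ Ico a b, LipschitzOnWith K (u t) (closedBall (γ t) r))
    (hdist : dist (η a) (γ a) ≤ r * Real.exp ((K + 1) * (a - b))) :
    ∀ t ∈ Icc a b, dist (η t) (γ t) ≤ r := by
  have radius_le (t : ℝ) (ht : t ≤ b) : r * Real.exp ((K + 1) * (t - b)) ≤ r :=
    mul_le_of_le_one_right hr.le <| Real.exp_le_one_iff.2 <|
      mul_nonpos_of_nonneg_of_nonpos (by positivity) (sub_nonpos.2 ht)
  have hasDerivAt_radius (t : ℝ) : HasDerivAt (fun t => r * Real.exp ((K + 1) * (t - b)))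
      (r * (Real.exp ((K + 1) * (t - b)) * (K + 1))) t := by
    simpa using (((hasDerivAt_id t).sub_const b).const_mul (K + 1 : ℝ)).exp.const_mul r
  have hasDerivAt_diff (t : ℝ) : HasDerivAt (fun t => η t - γ t) (u t (η t) - u t (γ t)) t :=
    (hη t).sub (hγ t)
  intro t ht
  rw [dist_eq_norm]
  refine (image_norm_le_of_norm_deriv_right_lt_deriv_boundary
    (fun t _ => (hasDerivAt_diff t).continuousAt.continuousWithinAt)
    (fun t _ => (hasDerivAt_diff t).hasDerivWithinAt) (by rwa [← dist_eq_norm])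
    hasDerivAt_radius (fun s hs hside => ?_) ht).trans (radius_le t ht.2)
  have hmem : η s ∈ closedBall (γ s) r := by
    rw [mem_closedBall, dist_eq_norm, hside]
    exact radius_le s hs.2.le
  calc ‖u s (η s) - u s (γ s)‖ ≤ K * ‖η s - γ s‖ := by
        simpa only [dist_eq_norm] using
          (hu s hs).dist_le_mul _ hmem _ (mem_closedBall_self hr.le)
    _ < r * (Real.exp ((K + 1) * (s - b)) * (K + 1)) := by
        rw [hside]
        nlinarith [mul_pos hr (Real.exp_pos ((K + 1) * (s - b)))]

namespace IsFlowOf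

lemma locallyLipschitz_of_nonneg [ProperSpace E] (hφ : IsFlowOf φ u)
    (hu : LocallyLipschitz (uncurry u)) {T : ℝ} (hT : 0 ≤ T) : LocallyLipschitz (φ T) := by
  intro x₀
  have htube : IsCompact ((fun t => (t, φ t x₀)) '' Icc 0 T) :=
    isCompact_Icc.image (continuous_id.prodMk (hφ.isIntegralCurve x₀).continuous)
  obtain ⟨K, hK⟩ := exists_lipschitzOnWith_closedBall_of_isCompact hu htube 1
  replace hK : ∀ t ∈ Ico 0 T, LipschitzOnWith K (u t) (closedBall (φ t x₀) 1) := fun t ht =>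
    hK _ (mem_image_of_mem _ (Ico_subset_Icc_self ht))
  set δ := Real.exp ((K + 1) * (0 - T))
  have hstay : ∀ x ∈ closedBall x₀ δ, ∀ t ∈ Ico 0 T, φ t x ∈ closedBall (φ t x₀) 1 :=
    fun x hx t ht => dist_integralCurve_le_of_dist_le one_pos (hφ.isIntegralCurve x₀)
      (hφ.isIntegralCurve x) hK (by simpa [hφ.map_zero, δ] using hx) t (Ico_subset_Icc_self ht)
  refine ⟨_, closedBall x₀ δ, closedBall_mem_nhds x₀ (Real.exp_pos _),
    LipschitzOnWith.of_dist_le_mul (K := (K * T).exp.toNNReal) fun x hx y hy => ?_⟩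
  have hgronwall := dist_le_of_trajectories_ODE_of_mem hK
    (hφ.isIntegralCurve x).continuous.continuousOn
    (fun t _ => (hφ.isIntegralCurve x t).hasDerivWithinAt) (hstay x hx)
    (hφ.isIntegralCurve y).continuous.continuousOn
    (fun t _ => (hφ.isIntegralCurve y t).hasDerivWithinAt) (hstay y hy) le_rfl T
    (right_mem_Icc.2 hT)
  simpa [hφ.map_zero, mul_comm, Real.exp_nonneg] using hgronwall

lemma suspension (hφ : IsFlowOf φ u) :
    IsFlowOf (fun s (p : ℝ × E) => (p.1, φ (s * p.1) p.2))
      (fun s p => (0, p.1 • u (s * p.1) p.2)) where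
  map_zero p := by simp [hφ.map_zero]
  isIntegralCurve p s :=
    (hasDerivAt_const s p.1).prodMk ((hφ.isIntegralCurve p.2).comp_mul p.1 s)

lemma locallyLipschitz_uncurry [ProperSpace E] (hφ : IsFlowOf φ u)
    (hu : ContDiff ℝ 1 (uncurry u)) : LocallyLipschitz (uncurry φ) := by
  have hsusp : ContDiff ℝ 1 (uncurry fun (s : ℝ) (p : ℝ × E) =>
      ((0 : ℝ), p.1 • u (s * p.1) p.2)) :=
    contDiff_const.prodMk <| contDiff_snd.fst.smul <|
      hu.comp ((contDiff_fst.mul contDiff_snd.fst).prodMk contDiff_snd.snd)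
  simpa [comp_def, uncurry_def] using LipschitzWith.prod_snd.locallyLipschitz.comp
    (hφ.suspension.locallyLipschitz_of_nonneg hsusp.locallyLipschitz zero_le_one)

lemma eq_add_integral [CompleteSpace E] (hφ : IsFlowOf φ u) (hu : Continuous (uncurry u))
    (t : ℝ) (x : E) : φ t x = x + ∫ τ in (0 : ℝ)..t, u τ (φ τ x) := by
  have hcont : Continuous fun τ => u τ (φ τ x) :=
    hu.comp (continuous_id.prodMk (hφ.isIntegralCurve x).continuous)
  rw [intervalIntegral.integral_eq_sub_of_hasDerivAt (fun τ _ => hφ.isIntegralCurve x τ)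
    (hcont.intervalIntegrable 0 t), hφ.map_zero, add_sub_cancel]

end IsFlowOf

lemma continuous_uncurry_fderiv {α F : Type*} [NormedAddCommGroup α] [NormedSpace ℝ α]
    [NormedAddCommGroup F] [NormedSpace ℝ F] {f : α → E → F} (hf : ContDiff ℝ 1 (uncurry f)) :
    Continuous fun p : α × E => fderiv ℝ (f p.1) p.2 :=
  (ContDiff.fderiv (f := fun p : α × E => f p.1) (n := 0)
    (hf.comp (contDiff_fst.fst.prodMk contDiff_snd)) contDiff_snd (by simp)).continuous

namespace IsFlowOf

variable [FiniteDimensional ℝ E]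

lemma fderiv_eq_id_add_integral (hφ : IsFlowOf φ u) (hu : ContDiff ℝ 1 (uncurry u))
    (hφ_diff : ∀ t, Differentiable ℝ (φ t)) (t : ℝ) (x : E) :
    IntervalIntegrable (fun τ => fderiv ℝ (u τ) (φ τ x) ∘L fderiv ℝ (φ τ) x) volume 0 t ∧
      fderiv ℝ (φ t) x = ContinuousLinearMap.id ℝ E +
        ∫ τ in (0 : ℝ)..t, fderiv ℝ (u τ) (φ τ x) ∘L fderiv ℝ (φ τ) x := by
  borelize E
  have hφ_lip := hφ.locallyLipschitz_uncurry hu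
  have htraj (y : E) : Continuous fun τ => (τ, φ τ y) :=
    continuous_id.prodMk (hφ.isIntegralCurve y).continuous
  have hvel (y : E) : Continuous fun τ => u τ (φ τ y) := hu.continuous.comp (htraj y)
  obtain ⟨K, hK⟩ := exists_lipschitzOnWith_closedBall_of_isCompact
    (f := fun τ y => u τ (φ τ y))
    (hu.locallyLipschitz.comp (LipschitzWith.prod_fst.locallyLipschitz.prodMk hφ_lip))
    (isCompact_uIcc (a := (0 : ℝ)) (b := t) |>.prod (isCompact_singleton (x := x))) 1
  have hmeas : Measurable fun τ => fderiv ℝ (u τ) (φ τ x) ∘L fderiv ℝ (φ τ) x :=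
    (isBoundedBilinearMap_comp.continuous.measurable).comp <|
      (((continuous_uncurry_fderiv hu).comp (htraj x)).measurable).prodMk <|
        (measurable_fderiv_with_param ℝ hφ_lip.continuous).comp measurable_prodMk_right
  have hu_diff (τ : ℝ) : Differentiable ℝ (u τ) :=
    (hu.comp (contDiff_prodMk_right τ)).differentiable one_ne_zero
  obtain ⟨hint, hderiv⟩ := intervalIntegral.hasFDerivAt_integral_of_dominated_loc_of_lip
    (F := fun y τ => u τ (φ τ y)) (bound := fun _ => K) (μ := volume) (a := 0) (b := t)
    (closedBall_mem_nhds x one_pos)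
    (.of_forall fun y => (hvel y).aestronglyMeasurable)
    ((hvel x).intervalIntegrable 0 t) hmeas.aestronglyMeasurable
    (.of_forall fun τ hτ => by
      simpa using! hK (τ, x) ⟨uIoc_subset_uIcc hτ, rfl⟩)
    intervalIntegrable_const
    (.of_forall fun τ _ => (hu_diff τ _).hasFDerivAt.comp x (hφ_diff τ x).hasFDerivAt)
  refine ⟨hint, HasFDerivAt.fderiv ?_⟩
  rw [funext (hφ.eq_add_integral hu.continuous t)]
  exact (hasFDerivAt_id x).add hderiv

lemma hasDerivAt_fderiv (hφ : IsFlowOf φ u) (hu : ContDiff ℝ 1 (uncurry u))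
    (hφ_diff : ∀ t, Differentiable ℝ (φ t)) (t : ℝ) (x : E) :
    HasDerivAt (fun τ => fderiv ℝ (φ τ) x) (fderiv ℝ (u t) (φ t x) ∘L fderiv ℝ (φ t) x) t := by
  have hvar := fun s => hφ.fderiv_eq_id_add_integral hu hφ_diff s x
  have hDφ : Continuous fun τ => fderiv ℝ (φ τ) x := by
    rw [funext fun s => (hvar s).2]
    exact continuous_const.add <| intervalIntegral.continuous_primitive
      (fun a b => (hvar a).1.symm.trans (hvar b).1) 0
  have hrhs : Continuous fun τ => fderiv ℝ (u τ) (φ τ x) ∘L fderiv ℝ (φ τ) x :=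
    ((continuous_uncurry_fderiv hu).comp
      (continuous_id.prodMk (hφ.isIntegralCurve x).continuous)).clm_comp hDφ
  exact ((hrhs.integral_hasStrictDerivAt 0 t).hasDerivAt.const_add _).congr_of_eventuallyEq
    (.of_forall fun s => (hvar s).2)

end IsFlowOf

end Flow

section Jacobi

variable {𝕜 E : Type*} [NontriviallyNormedField 𝕜]
  [NormedAddCommGroup E] [NormedSpace 𝕜 E] [FiniteDimensional 𝕜 E]

lemma hasDerivAt_det_one_add_smul (B : E →L[𝕜] E) :
    HasDerivAt (fun s : 𝕜 => (1 + s • B).det) (LinearMap.trace 𝕜 E B) 0 := by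
  let b := Module.finBasis 𝕜 E
  set M := LinearMap.toMatrix b b (B : E →ₗ[𝕜] E) with hM
  have hdet (s : 𝕜) : (1 + s • B).det = (1 + s • M).det := by
    rw [ContinuousLinearMap.det, ← LinearMap.det_toMatrix b, hM, ← LinearMap.toMatrix_one b]
    simp
  rw [funext fun s => (hdet s).trans (M.det_one_add_smul s), LinearMap.trace_eq_matrix_trace 𝕜 b]
  simpa using! (((hasDerivAt_id (0 : 𝕜)).const_mul M.trace).const_add 1).add
    ((Polynomial.hasDerivAt _ 0).mul (hasDerivAt_pow 2 (0 : 𝕜)))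

variable [CompleteSpace 𝕜]

lemma differentiable_det : Differentiable 𝕜 fun A : E →L[𝕜] E => A.det := by
  let b := Module.finBasis 𝕜 E
  have hentry (i j) : Differentiable 𝕜 fun A : E →L[𝕜] E =>
      LinearMap.toMatrix b b (A : E →ₗ[𝕜] E) i j :=
    (LinearMap.toContinuousLinearMap (Matrix.entryLinearMap 𝕜 𝕜 i j ∘ₗ
      (LinearMap.toMatrix b b).toLinearMap ∘ₗ ContinuousLinearMap.coeLM 𝕜)).differentiable
  simp only [ContinuousLinearMap.det, ← LinearMap.det_toMatrix b, Matrix.det_apply]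
  fun_prop

/-- The derivative depends on `A` only through `A t` and `B ∘ A t`, so `A` may be replaced by the
curve `s ↦ (1 + s B) ∘ A t`, whose determinant factors. -/
lemma hasDerivAt_det {A : 𝕜 → E →L[𝕜] E} {B : E →L[𝕜] E} {t : 𝕜}
    (hA : HasDerivAt A (B ∘L A t) t) :
    HasDerivAt (fun s => (A s).det) (LinearMap.trace 𝕜 E B * (A t).det) t := by
  set D := fderiv 𝕜 (fun A : E →L[𝕜] E => A.det) (A t)
  have hdet : HasFDerivAt (fun A : E →L[𝕜] E => A.det) D (A t) :=
    (differentiable_det (A t)).hasFDerivAt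
  have hcurve : HasDerivAt (fun s : 𝕜 => (1 + s • B) ∘L A t) (B ∘L A t) 0 := by
    simpa using (((hasDerivAt_id (0 : 𝕜)).smul_const B).const_add 1).clm_comp
      (hasDerivAt_const (0 : 𝕜) (A t))
  have hchain : HasDerivAt (fun s : 𝕜 => ((1 + s • B) ∘L A t).det) (D (B ∘L A t)) 0 :=
    HasFDerivAt.comp_hasDerivAt_of_eq (f := fun s : 𝕜 => (1 + s • B) ∘L A t)
      (l := fun A : E →L[𝕜] E => A.det) 0 hdet hcurve (by ext; simp)
  have hfactor : HasDerivAt (fun s : 𝕜 => ((1 + s • B) ∘L A t).det)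
      (LinearMap.trace 𝕜 E B * (A t).det) 0 :=
    ((hasDerivAt_det_one_add_smul B).mul_const (A t).det).congr_of_eventuallyEq
      (.of_forall fun s => LinearMap.det_comp _ _)
  rw [hfactor.unique hchain]
  exact hdet.comp_hasDerivAt (f := A) t hA

end Jacobi

section Transport

variable {E : Type*} [NormedAddCommGroup E] [NormedSpace ℝ E]

/-- The coefficient of the Lie derivative `d_L π = (∂v/∂t + D_x v (u) + v div u) · det` of the
time-dependent top-degree form `π = v · det` along the field `u`. -/
def topFormLieDeriv (u : ℝ → E → E) (v : ℝ → E → ℝ) (t : ℝ) (x : E) : ℝ :=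
  deriv (fun τ => v τ x) t + fderiv ℝ (v t) x (u t x)
    + v t x * LinearMap.trace ℝ E (fderiv ℝ (u t) x)

lemma hasDerivAt_comp_curve {F : Type*} [NormedAddCommGroup F] [NormedSpace ℝ F]
    {v : ℝ → E → F} {γ : ℝ → E} {γ' : E} {t : ℝ}
    (hv : DifferentiableAt ℝ (uncurry v) (t, γ t)) (hγ : HasDerivAt γ γ' t) :
    HasDerivAt (fun τ => v τ (γ τ)) (deriv (fun τ => v τ (γ t)) t + fderiv ℝ (v t) (γ t) γ') t := by
  set D := fderiv ℝ (uncurry v) (t, γ t)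
  have hD : HasFDerivAt (uncurry v) D (t, γ t) := hv.hasFDerivAt
  have htime : deriv (fun τ => v τ (γ t)) t = D (1, 0) :=
    (hD.comp_hasDerivAt (f := fun τ => (τ, γ t)) t
      ((hasDerivAt_id t).prodMk (hasDerivAt_const t (γ t)))).deriv
  have hspace : fderiv ℝ (v t) (γ t) = D ∘L .inr ℝ ℝ E :=
    (hD.comp (γ t) (hasFDerivAt_prodMk_right t (γ t))).fderiv
  have hsum : D (1, γ') = D (1, 0) + D (0, γ') := by simp [← map_add]
  rw [htime, hspace, ContinuousLinearMap.comp_apply, ContinuousLinearMap.inr_apply, ← hsum]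
  exact hD.comp_hasDerivAt (f := fun τ => (τ, γ τ)) t ((hasDerivAt_id t).prodMk hγ)

variable [FiniteDimensional ℝ E] {u φ : ℝ → E → E} {v : ℝ → E → ℝ}

lemma continuous_uncurry_topFormLieDeriv (hu : ContDiff ℝ 1 (uncurry u))
    (hv : ContDiff ℝ 1 (uncurry v)) : Continuous (uncurry (topFormLieDeriv u v)) := by
  have htime : Continuous fun p : ℝ × E => deriv (fun τ => v τ p.2) p.1 := by
    simp only [← fderiv_apply_one_eq_deriv]
    exact ((continuous_uncurry_fderiv (f := fun x τ => v τ x)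
      (hv.comp (contDiff_snd.prodMk contDiff_fst))).comp continuous_swap).clm_apply
      continuous_const
  have htrace : Continuous fun A : E →L[ℝ] E => LinearMap.trace ℝ E A :=
    (LinearMap.trace ℝ E ∘ₗ ContinuousLinearMap.coeLM ℝ).continuous_of_finiteDimensional
  exact (htime.add ((continuous_uncurry_fderiv hv).clm_apply hu.continuous)).add
    (hv.continuous.mul (htrace.comp (continuous_uncurry_fderiv hu)))

namespace IsFlowOf

lemma hasDerivAt_mul_det_fderiv (hφ : IsFlowOf φ u) (hu : ContDiff ℝ 1 (uncurry u))
    (hφ_diff : ∀ t, Differentiable ℝ (φ t)) (hv : ContDiff ℝ 1 (uncurry v)) (t : ℝ) (x : E) :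
    HasDerivAt (fun τ => v τ (φ τ x) * (fderiv ℝ (φ τ) x).det)
      (topFormLieDeriv u v t (φ t x) * (fderiv ℝ (φ t) x).det) t := by
  have hdet := hasDerivAt_det (hφ.hasDerivAt_fderiv hu hφ_diff t x)
  have hcoeff := hasDerivAt_comp_curve (hv.differentiable one_ne_zero _) (hφ.isIntegralCurve x t)
  refine (hcoeff.mul hdet).congr_deriv ?_
  rw [topFormLieDeriv]
  ring

lemma exists_norm_mul_det_fderiv_le (hφ : IsFlowOf φ u) (hu : ContDiff ℝ 1 (uncurry u))
    {w : ℝ → E → ℝ} (hw : Continuous (uncurry w)) {S : Set (ℝ × E)} (hS : IsCompact S) :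
    ∃ M : ℝ, ∀ p ∈ S, ‖w p.1 (φ p.1 p.2) * (fderiv ℝ (φ p.1) p.2).det‖ ≤ M := by
  have hφ_lip := hφ.locallyLipschitz_uncurry hu
  obtain ⟨C, hC⟩ := exists_norm_fderiv_le_of_isCompact hφ_lip hS
  have hpair : Continuous fun q : (ℝ × E) × (E →L[ℝ] E) =>
      w q.1.1 (φ q.1.1 q.1.2) * q.2.det :=
    (hw.comp (continuous_fst.fst.prodMk (hφ_lip.continuous.comp continuous_fst))).mul
      (ContinuousLinearMap.continuous_det.comp continuous_snd)
  obtain ⟨M, hM⟩ := (hS.prod (isCompact_closedBall (0 : E →L[ℝ] E) C)).exists_bound_of_continuousOn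
    hpair.continuousOn
  exact ⟨M, fun p hp => hM (p, _) ⟨hp, mem_closedBall_zero_iff.2 (hC p hp)⟩⟩

lemma measurable_mul_det_fderiv [MeasurableSpace E] [BorelSpace E] (hφ : IsFlowOf φ u)
    (hu : ContDiff ℝ 1 (uncurry u)) {w : ℝ → E → ℝ} (hw : Continuous (uncurry w)) (t : ℝ) :
    Measurable fun x => w t (φ t x) * (fderiv ℝ (φ t) x).det := by
  have hφ_cont : Continuous (φ t) :=
    (hφ.locallyLipschitz_uncurry hu).continuous.comp (.prodMk_right t)
  exact (hw.comp (continuous_const.prodMk hφ_cont)).measurable.mul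
    (ContinuousLinearMap.continuous_det.measurable.comp (measurable_fderiv ℝ (φ t)))

end IsFlowOf

theorem transport_theorem_three_form_general [MeasurableSpace E] [BorelSpace E]
    (μ : Measure E) [IsFiniteMeasureOnCompacts μ] {F : ℝ → E → E →L[ℝ] E}
    (hu : ContDiff ℝ 1 (uncurry u)) (hφ : IsFlowOf φ u)
    (hF : ∀ t x, HasFDerivAt (φ t) (F t x) x) (hv : ContDiff ℝ 1 (uncurry v))
    {Ω₀ : Set E} (hΩ₀ : IsCompact Ω₀) (t : ℝ) :
    HasDerivAt (fun τ => ∫ x in Ω₀, v τ (φ τ x) * (F τ x).det ∂μ)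
      (∫ x in Ω₀, topFormLieDeriv u v t (φ t x) * (F t x).det ∂μ) t := by
  have hφ_diff (s : ℝ) : Differentiable ℝ (φ s) := fun x => (hF s x).differentiableAt
  obtain rfl : F = fun s x => fderiv ℝ (φ s) x := by ext1 s; ext1 x; exact (hF s x).fderiv.symm
  have hLie := continuous_uncurry_topFormLieDeriv hu hv
  have hIcc : Icc (t - 1) (t + 1) ∈ 𝓝 t := Icc_mem_nhds (sub_one_lt t) (lt_add_one t)
  obtain ⟨M, hM⟩ := hφ.exists_norm_mul_det_fderiv_le hu hv.continuous
    (isCompact_singleton (x := t) |>.prod hΩ₀)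
  obtain ⟨M', hM'⟩ := hφ.exists_norm_mul_det_fderiv_le hu hLie
    (isCompact_Icc (a := t - 1) (b := t + 1) |>.prod hΩ₀)
  refine (hasDerivAt_integral_of_dominated_loc_of_deriv_le (bound := fun _ => M') hIcc
    (.of_forall fun s => (hφ.measurable_mul_det_fderiv hu hv.continuous s).aestronglyMeasurable)
    ?_ (hφ.measurable_mul_det_fderiv hu hLie t).aestronglyMeasurable ?_
    (integrableOn_const hΩ₀.measure_lt_top.ne)
    (.of_forall fun x s _ => hφ.hasDerivAt_mul_det_fderiv hu hφ_diff hv s x)).2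
  · exact Measure.integrableOn_of_bounded hΩ₀.measure_lt_top.ne
      (hφ.measurable_mul_det_fderiv hu hv.continuous t).aestronglyMeasurable
      ((ae_restrict_mem hΩ₀.measurableSet).mono fun x hx => hM (t, x) ⟨rfl, hx⟩)
  · filter_upwards [ae_restrict_mem hΩ₀.measurableSet] with x hx s hs using hM' (s, x) ⟨hs, hx⟩

end Transport

/-- Transport theorem for 3-forms:
`d/dt ∫_Ω π dω = ∫_Ω d_L π dω` for `π = v·det` on a convected domain. -/
theorem transport_theorem_three_form
    (u φ : ℝ → E3 → E3)
    (F : ℝ → E3 → (E3 ≃L[ℝ] E3))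
    (hu : ContDiff ℝ (⊤ : ℕ∞) (Function.uncurry u))
    (hφ0 : ∀ X, φ 0 X = X)
    (hφt : ∀ t X, HasDerivAt (fun τ => φ τ X) (u t (φ t X)) t)
    (hφsmooth : ∀ t, ContDiff ℝ (⊤ : ℕ∞) (φ t))
    (hφbij : ∀ t, Function.Bijective (φ t))
    (hφinv : ∀ t, ContDiff ℝ (⊤ : ℕ∞) (Function.invFun (φ t)))
    (hF : ∀ t X, (F t X : E3 →L[ℝ] E3) = fderiv ℝ (φ t) X)
    (v : ℝ → E3 → ℝ)
    (hv : ContDiff ℝ 1 (Function.uncurry v))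
    (Ω₀ : Set E3)
    (hΩ₀c : IsCompact Ω₀)
    (hΩ₀m : MeasurableSet Ω₀) :
    ∀ t : ℝ,
      HasDerivAt
        (fun τ => ∫ X in Ω₀,
          v τ (φ τ X) * LinearMap.det ((F τ X : E3 →L[ℝ] E3) : E3 →ₗ[ℝ] E3))
        (∫ X in Ω₀,
          (deriv (fun τ => v τ (φ t X)) t
            + fderiv ℝ (v t) (φ t X) (u t (φ t X))
            + v t (φ t X) * divv (u t) (φ t X))
          * LinearMap.det ((F t X : E3 →L[ℝ] E3) : E3 →ₗ[ℝ] E3)) t := by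
  have hF' (t : ℝ) (X : E3) : HasFDerivAt (φ t) (F t X : E3 →L[ℝ] E3) X :=
    hF t X ▸ ((hφsmooth t).differentiable (by simp) X).hasFDerivAt
  exact transport_theorem_three_form_general volume (hu.of_le (by exact_mod_cast le_top))
    ⟨hφ0, fun X t => hφt t X⟩ hF' hv hΩ₀c
end
end
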